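/- arXiv:2211.12059 — 3 statements merged into one kernel-verified Lean document; each statement's English description precedes it below -/
import Mathlib

section
/- Let $n$ be a positive even integer and let $p_0, p_1 \in \mathbb{C}[t_0,t_1]$ be homogeneous polynomials of degree $\tfrac{n}{2}+1$ with no common non-unit divisor. Then for every integer $i \ge 3$, the multiplication map is surjective: every homogeneous polynomial of degree $(2i-2)(\tfrac{n}{2}+1)$ in $\mathbb{C}[t_0,t_1]$ is a $\mathbb{C}$-linear combination of polynomials of the form $p_0^{j} p_1^{i-j} g$ with $0 \le j \le i$ and $g \in R_{(i-2)(\frac{n}{2}+1)}$. -/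
open MvPolynomial

lemma finrank_homog (d : ℕ) :
    Module.finrank ℂ (homogeneousSubmodule (Fin 2) ℂ d) = d + 1 := by
  rw [homogeneousSubmodule_eq_finsupp_supported]
  have e : {s : Fin 2 →₀ ℕ | s.degree = d} ≃ Fin (d + 1) :=
    { toFun := fun s => ⟨s.1 0, by
        have h : s.1.degree = d := s.2
        rw [Finsupp.degree_eq_sum, Fin.sum_univ_two] at h
        omega⟩
      invFun := fun k => ⟨Finsupp.equivFunOnFinite.symm ![k.1, d - k.1], by
        have := k.2
        simp only [Set.mem_ofPred_eq, Finsupp.degree_eq_sum, Fin.sum_univ_two]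
        simp
        omega⟩
      left_inv := by
        rintro ⟨s, hs⟩
        have h : s.degree = d := hs
        rw [Finsupp.degree_eq_sum, Fin.sum_univ_two] at h
        ext i
        fin_cases i
        · simp
        · simp
          omega
      right_inv := by
        intro k
        ext
        simp }
  rw [((AddMonoidAlgebra.supportedEquivFinsupp (R := ℂ) (S := ℂ)
    {s : Fin 2 →₀ ℕ | s.degree = d}).trans (Finsupp.domLCongr e)).finrank_eq]
  simp

lemma homog_quot {p a : MvPolynomial (Fin 2) ℂ} {m k : ℕ}
    (hp : p ∈ homogeneousSubmodule (Fin 2) ℂ m)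
    (ha : a ∈ homogeneousSubmodule (Fin 2) ℂ (m + k)) (h : p ∣ a) :
    ∃ c ∈ homogeneousSubmodule (Fin 2) ℂ k, a = p * c := by
  obtain ⟨c, rfl⟩ := h
  letI : GradedAlgebra (homogeneousSubmodule (Fin 2) ℂ) := MvPolynomial.gradedAlgebra
  refine ⟨DirectSum.decompose (homogeneousSubmodule (Fin 2) ℂ) c k, Subtype.mem _, ?_⟩
  rw [← DirectSum.coe_decompose_mul_add_of_left_mem (homogeneousSubmodule (Fin 2) ℂ) hp,
    DirectSum.decompose_of_mem_same _ ha]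

lemma ne_zero_aux {p q : MvPolynomial (Fin 2) ℂ} {m : ℕ} (hm : 0 < m)
    (hq : q ∈ homogeneousSubmodule (Fin 2) ℂ m) (hc : IsRelPrime p q) : p ≠ 0 := by
  rintro rfl
  have hu : IsUnit q := hc (dvd_zero _) dvd_rfl
  have h1 := IsHomogeneous.totalDegree hq hu.ne_zero
  obtain ⟨r, hr, h⟩ := MvPolynomial.isUnit_iff_eq_C_of_isReduced.1 hu
  rw [h, totalDegree_C] at h1
  omega

lemma step {p0 p1 : MvPolynomial (Fin 2) ℂ} {m : ℕ} (hm : 0 < m)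
    (hp0 : p0 ∈ homogeneousSubmodule (Fin 2) ℂ m)
    (hp1 : p1 ∈ homogeneousSubmodule (Fin 2) ℂ m)
    (hc : IsRelPrime p0 p1) (k : ℕ) (f : MvPolynomial (Fin 2) ℂ)
    (hf : f ∈ homogeneousSubmodule (Fin 2) ℂ (m + (m + k))) :
    ∃ a ∈ homogeneousSubmodule (Fin 2) ℂ (m + k),
      ∃ b ∈ homogeneousSubmodule (Fin 2) ℂ (m + k), f = p0 * a + p1 * b := by
  have h0 := ne_zero_aux hm hp1 hc
  have h1 := ne_zero_aux hm hp0 hc.symm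
  have hfin : ∀ d, Module.Finite ℂ (homogeneousSubmodule (Fin 2) ℂ d) := fun d =>
    Module.Finite.iff_fg.2 (homogeneousSubmodule_fg (σ := Fin 2) (R := ℂ) d)
  let φ : (homogeneousSubmodule (Fin 2) ℂ (m + k) × homogeneousSubmodule (Fin 2) ℂ (m + k))
      →ₗ[ℂ] MvPolynomial (Fin 2) ℂ :=
    ((LinearMap.mulLeft ℂ p0).comp (Submodule.subtype _)).coprod
      ((LinearMap.mulLeft ℂ p1).comp (Submodule.subtype _))
  have hφ : ∀ x, φ x = p0 * x.1.1 + p1 * x.2.1 := fun x => rfl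
  have hle : LinearMap.range φ ≤ homogeneousSubmodule (Fin 2) ℂ (m + (m + k)) := by
    rintro _ ⟨x, rfl⟩
    rw [hφ]
    exact Submodule.add_mem _ (IsHomogeneous.mul hp0 x.1.2) (IsHomogeneous.mul hp1 x.2.2)
  have hker : Module.finrank ℂ (LinearMap.ker φ) ≤ k + 1 := by
    let ψ : homogeneousSubmodule (Fin 2) ℂ k →ₗ[ℂ]
        (MvPolynomial (Fin 2) ℂ × MvPolynomial (Fin 2) ℂ) :=
      ((LinearMap.mulLeft ℂ p1).comp (Submodule.subtype _)).prod
        (-(LinearMap.mulLeft ℂ p0).comp (Submodule.subtype _))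
    have hψ : ∀ c, ψ c = (p1 * c.1, -(p0 * c.1)) := fun c => rfl
    let ι : LinearMap.ker φ →ₗ[ℂ] (MvPolynomial (Fin 2) ℂ × MvPolynomial (Fin 2) ℂ) :=
      (LinearMap.prodMap (Submodule.subtype _) (Submodule.subtype _)).comp (Submodule.subtype _)
    have hι : ∀ x, ι x = (x.1.1.1, x.1.2.1) := fun c => rfl
    have hinj : Function.Injective ι := by
      rintro ⟨⟨⟨a, _⟩, ⟨b, _⟩⟩, _⟩ ⟨⟨⟨c, _⟩, ⟨d, _⟩⟩, _⟩ h
      simp only [hι, Prod.mk.injEq] at h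
      obtain ⟨rfl, rfl⟩ := h
      rfl
    have hr : LinearMap.range ι ≤ LinearMap.range ψ := by
      rintro _ ⟨⟨⟨⟨a, ha⟩, ⟨b, hb⟩⟩, hx⟩, rfl⟩
      have hx' : p0 * a + p1 * b = 0 := hx
      have hd : p1 ∣ p0 * a := ⟨-b, by linear_combination hx'⟩
      obtain ⟨c, hcm, rfl⟩ := homog_quot hp1 ha (hc.symm.dvd_of_dvd_mul_left hd)
      refine ⟨⟨c, hcm⟩, ?_⟩
      rw [hψ, hι]
      refine Prod.ext rfl ?_
      apply mul_left_cancel₀ h1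
      linear_combination -hx'
    have e1 := LinearMap.finrank_range_of_inj hinj
    have e2 := Submodule.finrank_mono hr
    have e3 := LinearMap.finrank_range_le ψ
    rw [finrank_homog] at e3
    omega
  have hrn := LinearMap.finrank_range_add_finrank_ker φ
  rw [Module.finrank_prod, finrank_homog] at hrn
  have heq := Submodule.eq_of_le_of_finrank_le hle (by rw [finrank_homog]; omega)
  rw [← heq] at hf
  obtain ⟨x, rfl⟩ := hf
  exact ⟨x.1.1, x.1.2, x.2.1, x.2.2, hφ x⟩

lemma iterate_step {p0 p1 : MvPolynomial (Fin 2) ℂ} {m : ℕ} (hm : 0 < m)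
    (hp0 : p0 ∈ homogeneousSubmodule (Fin 2) ℂ m)
    (hp1 : p1 ∈ homogeneousSubmodule (Fin 2) ℂ m)
    (hc : IsRelPrime p0 p1) (e : ℕ) (i : ℕ) :
    ∀ f ∈ homogeneousSubmodule (Fin 2) ℂ ((e + 1 + i) * m),
      f ∈ Submodule.span ℂ
        {q : MvPolynomial (Fin 2) ℂ | ∃ j, j ≤ i ∧
          ∃ g ∈ homogeneousSubmodule (Fin 2) ℂ ((e + 1) * m),
            q = p0 ^ j * p1 ^ (i - j) * g} := by
  induction i with
  | zero =>
    intro f hf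
    exact Submodule.subset_span ⟨0, le_rfl, f, hf, by simp⟩
  | succ i ih =>
    intro f hf
    obtain ⟨a, ha, b, hb, rfl⟩ := step hm hp0 hp1 hc ((e + i) * m) f (by
      convert hf using 2; ring)
    have hd : m + (e + i) * m = (e + 1 + i) * m := by ring
    rw [hd] at ha hb
    refine Submodule.add_mem _ ?_ ?_
    · have := Submodule.mem_map_of_mem (f := LinearMap.mulLeft ℂ p0) (ih a ha)
      rw [Submodule.map_span] at this
      refine Submodule.span_mono ?_ this
      rintro _ ⟨_, ⟨j, hj, g, hg, rfl⟩, rfl⟩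
      refine ⟨j + 1, by omega, g, hg, ?_⟩
      rw [Nat.add_sub_add_right, LinearMap.mulLeft_apply]
      ring
    · have := Submodule.mem_map_of_mem (f := LinearMap.mulLeft ℂ p1) (ih b hb)
      rw [Submodule.map_span] at this
      refine Submodule.span_mono ?_ this
      rintro _ ⟨_, ⟨j, hj, g, hg, rfl⟩, rfl⟩
      refine ⟨j, by omega, g, hg, ?_⟩
      rw [Nat.sub_add_comm hj, LinearMap.mulLeft_apply]
      ring

/-- For coprime homogeneous `p₀, p₁` of degree `n/2 + 1` (with `n` a positive
even integer) and `i ≥ 3`, the multiplication map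
`Sym^i ⟨p₀, p₁⟩ ⊗ R_{(i-2)(n/2+1)} → R_{(2i-2)(n/2+1)}` is surjective. -/
theorem multiplication_map_surjective (n : ℕ) (hn : 0 < n) (hne : Even n)
    (p0 p1 : MvPolynomial (Fin 2) ℂ)
    (hp0 : p0 ∈ homogeneousSubmodule (Fin 2) ℂ (n / 2 + 1))
    (hp1 : p1 ∈ homogeneousSubmodule (Fin 2) ℂ (n / 2 + 1))
    (hcop : ∀ d : MvPolynomial (Fin 2) ℂ, d ∣ p0 → d ∣ p1 → IsUnit d)
    (i : ℕ) (hi : 3 ≤ i) :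
    ∀ f ∈ homogeneousSubmodule (Fin 2) ℂ ((2 * i - 2) * (n / 2 + 1)),
      f ∈ Submodule.span ℂ
        {q : MvPolynomial (Fin 2) ℂ | ∃ j, j ≤ i ∧
          ∃ g ∈ homogeneousSubmodule (Fin 2) ℂ ((i - 2) * (n / 2 + 1)),
            q = p0 ^ j * p1 ^ (i - j) * g} := by
  obtain ⟨e, rfl⟩ : ∃ e, i = e + 3 := ⟨i - 3, by omega⟩
  have h := iterate_step (Nat.succ_pos (n / 2)) hp0 hp1 (fun d h h' => hcop d h h') e (e + 3)
  have h1 : 2 * (e + 3) - 2 = e + 1 + (e + 3) := by omega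
  have h2 : e + 3 - 2 = e + 1 := by omega
  rw [h1, h2]
  exact h
end

section
/- Let $m \ge 1$ and $a$ be integers with $5m \le 2a < 6m$, and let $g \in \mathbb{C}[\tau]$ be a polynomial of degree $2a-5m$ with nonzero constant term $g(0) \ne 0$. Then the $\mathbb{C}$-linear map from the span of $\{\tau^{-1}, \tau^{-2}, \ldots, \tau^{-(m-1)}\}$ in $L$ to $Q_{2a-6m}$ sending $v$ to the class of $g \cdot v$ modulo $S_{2a-6m}$ is surjective, and it is bijective if and only if $2a = 5m$. (This is the map $\alpha \colon H^1(\mathbb{F}_m, \mathcal{T}_{\mathbb{F}_m}) \to H^1(\sigma_\infty, \mathcal{O}_{\sigma_\infty}(B))$ for a branch curve $B = \sigma_\infty + B'$ with $\sigma_\infty \not< B'$, written in \v{C}ech representatives.) -/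
open LaurentPolynomial

/-- The subspace of `ℂ[τ, τ⁻¹]` spanned by the monomials `τ^j` with `j ≥ 0` together with the
monomials `τ^j` with `j ≤ c`. -/
noncomputable def cechSubspace (c : ℤ) : Submodule ℂ (LaurentPolynomial ℂ) :=
  Submodule.span ℂ {p : LaurentPolynomial ℂ | ∃ j : ℤ, (0 ≤ j ∨ j ≤ c) ∧ p = T j}

lemma coeff_eq_zero_of_mem_span (P : ℤ → Prop) (v : LaurentPolynomial ℂ)
    (hv : v ∈ Submodule.span ℂ {p : LaurentPolynomial ℂ | ∃ j : ℤ, P j ∧ p = T j})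
    (n : ℤ) (hn : ¬ P n) : v.coeff n = 0 := by
  induction hv using Submodule.span_induction with
  | mem x hx =>
    obtain ⟨j, hj, rfl⟩ := hx
    rw [T_apply, if_neg]
    rintro rfl
    exact hn hj
  | zero => simp
  | add x y _ _ hx hy => simp [hx, hy]
  | smul r x _ hx => simp [hx]

lemma span_neg_eq (k : ℤ) :
    {p : LaurentPolynomial ℂ | ∃ i : ℤ, 1 ≤ i ∧ i ≤ k ∧ p = T (-i)} =
      {p : LaurentPolynomial ℂ | ∃ j : ℤ, (-k ≤ j ∧ j ≤ -1) ∧ p = T j} := by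
  ext p
  constructor
  · rintro ⟨i, h1, h2, rfl⟩
    exact ⟨-i, ⟨by omega, by omega⟩, rfl⟩
  · rintro ⟨j, ⟨h1, h2⟩, rfl⟩
    exact ⟨-j, by omega, by omega, by simp⟩

lemma toLaurent_mul_T_mem (M : Submodule ℂ (LaurentPolynomial ℂ)) (e : ℤ)
    (hM : ∀ j : ℤ, e ≤ j → (T j : LaurentPolynomial ℂ) ∈ M) (p : Polynomial ℂ) :
    p.toLaurent * T e ∈ M := by
  induction p using Polynomial.induction_on' with
  | add p q hp hq => rw [map_add, add_mul]; exact M.add_mem hp hq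
  | monomial n r =>
    rw [Polynomial.toLaurent_C_mul_T, mul_T_assoc, ← smul_eq_C_mul]
    exact M.smul_mem _ (hM _ (by omega))

lemma surj_aux (c : ℤ) (g : Polynomial ℂ) (h0 : g.coeff 0 ≠ 0) (p : LaurentPolynomial ℂ) :
    ∃ w ∈ Submodule.span ℂ
        {p : LaurentPolynomial ℂ | ∃ i : ℤ, 1 ≤ i ∧ i ≤ -c - 1 ∧ p = T (-i)},
      g.toLaurent * w - p ∈ cechSubspace c := by
  set W := Submodule.span ℂ
        {p : LaurentPolynomial ℂ | ∃ i : ℤ, 1 ≤ i ∧ i ≤ -c - 1 ∧ p = T (-i)} with hW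
  set M := W.map (LinearMap.mulLeft ℂ g.toLaurent) ⊔ cechSubspace c with hMdef
  have hS : ∀ j : ℤ, (0 ≤ j ∨ j ≤ c) → (T j : LaurentPolynomial ℂ) ∈ M := fun j hj =>
    Submodule.mem_sup_right (Submodule.subset_span ⟨j, hj, rfl⟩)
  have key : ∀ n : ℕ, ∀ j : ℤ, -(n : ℤ) ≤ j → (T j : LaurentPolynomial ℂ) ∈ M := by
    intro n
    induction n with
    | zero => intro j hj; exact hS j (Or.inl (by simpa using hj))
    | succ n ih =>
      intro j hj
      by_cases hj' : -(n : ℤ) ≤ j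
      · exact ih j hj'
      by_cases hc : j ≤ c
      · exact hS j (Or.inr hc)
      have hw : (T j : LaurentPolynomial ℂ) ∈ W :=
        Submodule.subset_span ⟨-j, by omega, by omega, by simp⟩
      have h1 : g.toLaurent * T j ∈ M :=
        Submodule.mem_sup_left ⟨T j, hw, rfl⟩
      have h2 : g.divX.toLaurent * T (j + 1) ∈ M :=
        toLaurent_mul_T_mem M (j + 1) (fun i hi => ih i (by push_cast at hj; omega)) _
      have h3 : g.toLaurent * T j = g.divX.toLaurent * T (j + 1) + g.coeff 0 • T j := by
        conv_lhs => rw [← Polynomial.divX_mul_X_add g]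
        rw [map_add, map_mul, Polynomial.toLaurent_X, Polynomial.toLaurent_C, add_mul,
          mul_T_assoc, smul_eq_C_mul, add_comm 1 j]
      have h4 : g.coeff 0 • (T j : LaurentPolynomial ℂ) ∈ M := by
        rw [h3] at h1
        exact (M.add_mem_iff_right h2).1 h1
      exact (M.smul_mem_iff h0).1 h4
  have hp : p ∈ M := by
    induction p using LaurentPolynomial.induction_on' with
    | add p q hp hq => exact M.add_mem hp hq
    | C_mul_T n r =>
      rw [← smul_eq_C_mul]
      exact M.smul_mem _ (key n.natAbs n (by omega))
  obtain ⟨x, ⟨w, hw, rfl⟩, s, hs, rfl⟩ := Submodule.mem_sup.1 hp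
  refine ⟨w, hw, ?_⟩
  simpa using hs

/-- For `5m ≤ 2a < 6m` and `g ∈ ℂ[τ]` of degree `2a - 5m` with `g(0) ≠ 0`, the
multiplication-by-`g` map from `⟨τ⁻¹, …, τ^{-(m-1)}⟩` to `Q_{2a-6m}` is surjective, and it is
bijective if and only if `2a = 5m` (the map `α : H¹(𝔽_m, T) → H¹(σ_∞, 𝒪_{σ_∞}(B))` for
`B = σ_∞ + B'`). -/
theorem alpha_map_for_sigma (m a : ℤ) (hm : 1 ≤ m) (ha : 5 * m ≤ 2 * a) (ha' : 2 * a < 6 * m)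
    (g : Polynomial ℂ) (hdeg : (g.natDegree : ℤ) = 2 * a - 5 * m) (h0 : g.coeff 0 ≠ 0) :
    (∀ y : LaurentPolynomial ℂ ⧸ cechSubspace (2 * a - 6 * m),
      ∃ v ∈ Submodule.span ℂ
          {p : LaurentPolynomial ℂ | ∃ i : ℤ, 1 ≤ i ∧ i ≤ m - 1 ∧ p = T (-i)},
        Submodule.Quotient.mk (p := cechSubspace (2 * a - 6 * m)) (g.toLaurent * v) = y) ∧
    ((∀ v ∈ Submodule.span ℂ
          {p : LaurentPolynomial ℂ | ∃ i : ℤ, 1 ≤ i ∧ i ≤ m - 1 ∧ p = T (-i)},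
        Submodule.Quotient.mk (p := cechSubspace (2 * a - 6 * m)) (g.toLaurent * v) = 0 →
          v = 0) ↔ 2 * a = 5 * m) := by
  have hmono : Submodule.span ℂ {p : LaurentPolynomial ℂ |
        ∃ i : ℤ, 1 ≤ i ∧ i ≤ -(2 * a - 6 * m) - 1 ∧ p = T (-i)} ≤
      Submodule.span ℂ {p : LaurentPolynomial ℂ | ∃ i : ℤ, 1 ≤ i ∧ i ≤ m - 1 ∧ p = T (-i)} := by
    apply Submodule.span_mono
    rintro p ⟨i, h1, h2, rfl⟩
    exact ⟨i, h1, by omega, rfl⟩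
  refine ⟨?_, ?_, ?_⟩
  · intro y
    obtain ⟨p, rfl⟩ := Submodule.Quotient.mk_surjective _ y
    obtain ⟨w, hw, h⟩ := surj_aux (2 * a - 6 * m) g h0 p
    exact ⟨w, hmono hw, (Submodule.Quotient.eq _).2 h⟩
  · intro hinj
    by_contra hne
    obtain ⟨w, hw, h⟩ := surj_aux (2 * a - 6 * m) g h0 (g.toLaurent * T (-(m - 1)))
    have hT : (T (-(m - 1)) : LaurentPolynomial ℂ) ∈ Submodule.span ℂ
        {p : LaurentPolynomial ℂ | ∃ i : ℤ, 1 ≤ i ∧ i ≤ m - 1 ∧ p = T (-i)} :=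
      Submodule.subset_span ⟨m - 1, by omega, le_rfl, rfl⟩
    have hz := hinj (w - T (-(m - 1))) (Submodule.sub_mem _ (hmono hw) hT)
      ((Submodule.Quotient.mk_eq_zero _).2 (by rwa [mul_sub]))
    rw [span_neg_eq] at hw
    have hc := coeff_eq_zero_of_mem_span _ w hw (-(m - 1)) (by omega)
    rw [sub_eq_zero.1 hz, T_apply, if_pos rfl] at hc
    exact one_ne_zero hc
  · intro h v hv hz
    have hd : g.natDegree = 0 := by omega
    rw [Submodule.Quotient.mk_eq_zero, Polynomial.eq_C_of_natDegree_eq_zero hd,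
      Polynomial.toLaurent_C, ← smul_eq_C_mul, Submodule.smul_mem_iff _ h0] at hz
    rw [span_neg_eq] at hv
    ext n
    by_cases hn : -(m - 1) ≤ n ∧ n ≤ -1
    · exact coeff_eq_zero_of_mem_span _ v hz n (by omega)
    · exact coeff_eq_zero_of_mem_span _ v hv n hn
end

section
/- Let $m \ge 1$ and $a$ be integers with $2a > 4m+4$, and let $g \in \mathbb{C}[\tau]$ be a polynomial of degree $2a-4m$ with nonzero constant term $g(0) \ne 0$. Then the $\mathbb{C}$-linear map from the span of $\{\tau^{-1}, \tau^{-2}, \ldots, \tau^{-(m-1)}\}$ in $L$ to $Q_{2a-5m}$ sending $v$ to the class of $g \cdot v$ modulo $S_{2a-5m}$ is surjective; consequently its rank equals $\max(0,\, 5m-2a-1)$, which is $0$ when $2a \ge 5m-1$ and satisfies $\max(0, 5m-2a-1) < m-4$ when $4m+4 < 2a < 5m$. (This computes the rank of the map $\alpha \colon H^1(\mathbb{F}_m, \mathcal{T}_{\mathbb{F}_m}) \to H^1(B, \mathcal{O}_B(B))$ for a branch curve $B = 2\sigma_\infty + B'$ with $\sigma_\infty \not< B'$, written in \v{C}ech representatives.)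 -/
open LaurentPolynomial

/-- Every Laurent polynomial is the sum of its monomials. -/
lemma laurent_eq_sum (p : LaurentPolynomial ℂ) :
    p = ∑ j ∈ p.coeff.support, p.coeff j • (T j : LaurentPolynomial ℂ) := by
  ext a
  rw [AddMonoidAlgebra.coeff_sum, Finsupp.finset_sum_apply]
  simp [eq_comm]

lemma T_mem_cech {c j : ℤ} (h : 0 ≤ j ∨ j ≤ c) : T j ∈ cechSubspace c :=
  Submodule.subset_span ⟨j, h, rfl⟩

/-- Coefficient extraction in the window `c < j < 0`. -/
noncomputable def cechCoeff (c : ℤ) : LaurentPolynomial ℂ →ₗ[ℂ] (Finset.Ioo c 0 → ℂ) where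
  toFun p j := p.coeff j
  map_add' p q := by ext j; simp
  map_smul' r p := by ext j; simp

lemma cechCoeff_apply (c : ℤ) (p : LaurentPolynomial ℂ) (j : Finset.Ioo c 0) :
    cechCoeff c p j = p.coeff j := rfl

lemma ker_cechCoeff (c : ℤ) : LinearMap.ker (cechCoeff c) = cechSubspace c := by
  apply le_antisymm
  · intro p hp
    rw [LinearMap.mem_ker] at hp
    rw [laurent_eq_sum p]
    refine Submodule.sum_mem _ fun j hj => ?_
    by_cases h : 0 ≤ j ∨ j ≤ c
    · exact Submodule.smul_mem _ _ (T_mem_cech h)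
    · have h1 := congrFun hp ⟨j, by rw [Finset.mem_Ioo]; omega⟩
      rw [cechCoeff_apply] at h1
      simp only [Pi.zero_apply] at h1
      rw [h1, zero_smul]
      exact Submodule.zero_mem _
  · refine Submodule.span_le.2 ?_
    rintro _ ⟨j, hj, rfl⟩
    rw [SetLike.mem_coe, LinearMap.mem_ker]
    ext ⟨i, hi⟩
    rw [Finset.mem_Ioo] at hi
    rw [cechCoeff_apply, T_apply, if_neg (by dsimp only; omega)]
    rfl

lemma cechCoeff_surjective (c : ℤ) : Function.Surjective (cechCoeff c) := by
  intro f
  refine ⟨∑ j, f j • T (j : ℤ), ?_⟩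
  ext i
  rw [cechCoeff_apply, AddMonoidAlgebra.coeff_sum, Finsupp.finset_sum_apply]
  simp [Subtype.coe_inj]

lemma finrank_cech (c : ℤ) :
    Module.finrank ℂ (LaurentPolynomial ℂ ⧸ cechSubspace c) = (-c - 1).toNat := by
  rw [← ker_cechCoeff, LinearEquiv.finrank_eq
    ((cechCoeff c).quotKerEquivOfSurjective (cechCoeff_surjective c))]
  simp

lemma toLaurent_mul_T (g : Polynomial ℂ) (n : ℤ) :
    g.toLaurent * T n =
      ∑ k ∈ Finset.range (g.natDegree + 1), g.coeff k • (T (k + n) : LaurentPolynomial ℂ) := by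
  conv_lhs => rw [g.as_sum_range_C_mul_X_pow]
  rw [map_sum, Finset.sum_mul]
  refine Finset.sum_congr rfl fun k _ => ?_
  rw [Polynomial.toLaurent_C_mul_X_pow, T_add, smul_eq_C_mul, mul_assoc]

/-- If a subspace `W` contains `S_c` and `g * τ^{-n}` for `1 ≤ n < -c`, it is everything. -/
lemma cech_top (c : ℤ) (g : Polynomial ℂ) (h0 : g.coeff 0 ≠ 0)
    (W : Submodule ℂ (LaurentPolynomial ℂ)) (hS : cechSubspace c ≤ W)
    (hW : ∀ n : ℤ, 1 ≤ n → n < -c → g.toLaurent * T (-n) ∈ W) (p : LaurentPolynomial ℂ) :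
    p ∈ W := by
  have key : ∀ n : ℕ, (T (-(n : ℤ)) : LaurentPolynomial ℂ) ∈ W := by
    intro n
    induction n using Nat.strong_induction_on with
    | _ n ih =>
      by_cases h : 0 ≤ -(n : ℤ) ∨ -(n : ℤ) ≤ c
      · exact hS (T_mem_cech h)
      · have h1 := hW n (by omega) (by omega)
        rw [toLaurent_mul_T, Finset.sum_range_succ'] at h1
        have h2 : ∑ k ∈ Finset.range g.natDegree,
            g.coeff (k + 1) • (T (((k + 1 : ℕ) : ℤ) + -(n : ℤ)) : LaurentPolynomial ℂ) ∈ W := by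
          refine Submodule.sum_mem _ fun k _ => Submodule.smul_mem _ _ ?_
          by_cases hk : n ≤ k + 1
          · exact hS (T_mem_cech (Or.inl (by omega)))
          · have h3 := ih (n - (k + 1)) (by omega)
            have h4 : -((n - (k + 1) : ℕ) : ℤ) = ((k + 1 : ℕ) : ℤ) + -(n : ℤ) := by omega
            rwa [h4] at h3
        have h5 := (Submodule.add_mem_iff_right _ h2).1 h1
        rw [Submodule.smul_mem_iff _ h0] at h5
        simpa using h5
  rw [laurent_eq_sum p]
  refine Submodule.sum_mem _ fun j _ => Submodule.smul_mem _ _ ?_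
  by_cases hj : 0 ≤ j
  · exact hS (T_mem_cech (Or.inl hj))
  · have h := key (-j).toNat
    have h4 : -(((-j).toNat : ℕ) : ℤ) = j := by omega
    rwa [h4] at h

/-- For `2a > 4m + 4` and `g ∈ ℂ[τ]` of degree `2a - 4m` with `g(0) ≠ 0`, the
multiplication-by-`g` map from `⟨τ⁻¹, …, τ^{-(m-1)}⟩` to `Q_{2a-5m}` is surjective, so its rank
is `max 0 (5m - 2a - 1)`, which vanishes for `2a ≥ 5m - 1` and is `< m - 4` for
`4m + 4 < 2a < 5m` (the rank of `α : H¹(𝔽_m, T) → H¹(B, 𝒪_B(B))` for `B = 2σ_∞ + B'`). -/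
theorem alpha_map_for_two_sigma (m a : ℤ) (hm : 1 ≤ m) (ha : 2 * a > 4 * m + 4)
    (g : Polynomial ℂ) (hdeg : (g.natDegree : ℤ) = 2 * a - 4 * m) (h0 : g.coeff 0 ≠ 0) :
    (∀ y : LaurentPolynomial ℂ ⧸ cechSubspace (2 * a - 5 * m),
      ∃ v ∈ Submodule.span ℂ
          {p : LaurentPolynomial ℂ | ∃ i : ℤ, 1 ≤ i ∧ i ≤ m - 1 ∧ p = T (-i)},
        Submodule.Quotient.mk (p := cechSubspace (2 * a - 5 * m)) (g.toLaurent * v) = y) ∧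
    Module.finrank ℂ (LaurentPolynomial ℂ ⧸ cechSubspace (2 * a - 5 * m))
      = (5 * m - 2 * a - 1).toNat ∧
    (2 * a ≥ 5 * m - 1 → (5 * m - 2 * a - 1).toNat = 0) ∧
    (4 * m + 4 < 2 * a ∧ 2 * a < 5 * m → ((5 * m - 2 * a - 1).toNat : ℤ) < m - 4) := by
  refine ⟨?_, ?_, by omega, by omega⟩
  · intro y
    obtain ⟨p, rfl⟩ := Submodule.Quotient.mk_surjective _ y
    set V := Submodule.span ℂ
          {p : LaurentPolynomial ℂ | ∃ i : ℤ, 1 ≤ i ∧ i ≤ m - 1 ∧ p = T (-i)} with hV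
    have hp : p ∈ V.map (LinearMap.mulLeft ℂ g.toLaurent) ⊔ cechSubspace (2 * a - 5 * m) := by
      refine cech_top (2 * a - 5 * m) g h0 _ le_sup_right (fun n h1 h2 => ?_) p
      exact Submodule.mem_sup_left
        ⟨T (-n), Submodule.subset_span ⟨n, h1, by omega, rfl⟩, rfl⟩
    obtain ⟨_, ⟨v, hv, rfl⟩, s, hs, rfl⟩ := Submodule.mem_sup.1 hp
    refine ⟨v, hv, ?_⟩
    rw [Submodule.Quotient.eq]
    simpa using hs
  · rw [finrank_cech]
    congr 1
    ring
end
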